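/- Fix c* > 0 and K = d_sr^α · (β² M N_r Δ₁ + d_k^α λ_q²) > 0, and define for each transmit SNR ρ > 0 the perfect-SIC outage probability P(ρ) = F(√(c* K / ρ)). Then lim_{ρ→∞} ρ^{(μ₀+1)/2} · P(ρ) = (c* K)^{(μ₀+1)/2} / (Γ(μ₀+2) · φ₀^{μ₀+1}). In particular P(ρ) decays like ρ^{−(μ₀+1)/2} at high SNR. -/

import Mathlib

open MeasureTheory ProbabilityTheory Topology Filter

/-- Lower incomplete gamma function `γ(s, x) = ∫₀ˣ t^{s-1} e^{-t} dt`. -/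
noncomputable def lowerGamma (s x : ℝ) : ℝ := ∫ t in (0:ℝ)..x, t ^ (s - 1) * Real.exp (-t)

/-- `μ₀ = ((M+1)π² − 16)/(16 − π²)`. -/
noncomputable def mu0 (M : ℕ) : ℝ := (((M : ℝ) + 1) * Real.pi ^ 2 - 16) / (16 - Real.pi ^ 2)

/-- `φ₀ = (16 − π²)/(4π)`. -/
noncomputable def phi0 : ℝ := (16 - Real.pi ^ 2) / (4 * Real.pi)

/-- The CDF of the Gamma distribution with shape `μ₀+1` and scale `φ₀`:
`F(x) = γ(μ₀+1, x/φ₀)/Γ(μ₀+1)`. -/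
noncomputable def F (M : ℕ) (x : ℝ) : ℝ :=
  lowerGamma (mu0 M + 1) (x / phi0) / Real.Gamma (mu0 M + 1)

theorem lowerGamma_bounds (s x : ℝ) (hs : 0 < s) (hx : 0 < x) :
    Real.exp (-x) * (x ^ s / s) ≤ lowerGamma s x ∧ lowerGamma s x ≤ x ^ s / s := by
  have hI : IntervalIntegrable (fun t : ℝ => t ^ (s - 1)) volume 0 x :=
    intervalIntegral.intervalIntegrable_rpow' (by linarith)
  have hval : ∫ t in (0:ℝ)..x, t ^ (s - 1) = x ^ s / s := by
    rw [integral_rpow (Or.inl (by linarith))]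
    simp [Real.zero_rpow hs.ne']
  have hJ : IntervalIntegrable (fun t : ℝ => t ^ (s - 1) * Real.exp (-t)) volume 0 x :=
    hI.mul_continuousOn (by fun_prop)
  unfold lowerGamma
  rw [← hval]
  constructor
  · rw [← intervalIntegral.integral_const_mul]
    apply intervalIntegral.integral_mono_on hx.le (hI.const_mul _) hJ
    intro t ht
    rw [mul_comm]
    apply mul_le_mul_of_nonneg_left _ (Real.rpow_nonneg ht.1 _)
    exact Real.exp_le_exp.2 (by linarith [ht.2])
  · apply intervalIntegral.integral_mono_on hx.le hJ hI
    intro t ht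
    apply mul_le_of_le_one_right (Real.rpow_nonneg ht.1 _)
    exact Real.exp_le_one_iff.2 (by linarith [ht.1])

/-- **Asymptotic OP (ARIS-NOMA, perfect SIC)**: with
`K = d_sr^α (β² M N_r Δ₁ + d_k^α λ_q²)` and `P(ρ) = F(√(c* K/ρ))`,
`lim_{ρ→∞} ρ^{(μ₀+1)/2} P(ρ) = (c* K)^{(μ₀+1)/2} / (Γ(μ₀+2) φ₀^{μ₀+1})`. -/
theorem asymptotic_outage_ARIS_NOMA_pSIC
    (M : ℕ) (hM : 0 < M)
    (c lamq beta Nr Δ1 alpha dsr dk : ℝ)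
    (hc : 0 < c) (hlam0 : 0 < lamq) (hlam1 : lamq ≤ 1) (hbeta : 0 < beta)
    (hNr : 0 < Nr) (hΔ1 : 0 < Δ1) (halpha : 0 < alpha) (hdsr : 0 < dsr) (hdk : 0 < dk)
    (K : ℝ)
    (hK : K = dsr ^ alpha * (beta ^ 2 * (M : ℝ) * Nr * Δ1 + dk ^ alpha * lamq ^ 2)) :
    Filter.Tendsto
      (fun rho : ℝ => rho ^ ((mu0 M + 1) / 2) * F M (Real.sqrt (c * K / rho)))
      Filter.atTop
      (𝓝 ((c * K) ^ ((mu0 M + 1) / 2) /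
        (Real.Gamma (mu0 M + 2) * phi0 ^ (mu0 M + 1)))) := by
  have hpi : (0:ℝ) < 16 - Real.pi ^ 2 := by nlinarith [Real.pi_lt_four, Real.pi_pos]
  have hphi : 0 < phi0 := by unfold phi0; have := Real.pi_pos; positivity
  have hM' : (0:ℝ) < M := by exact_mod_cast hM
  have hs : 0 < mu0 M + 1 := by
    have : mu0 M + 1 = M * Real.pi ^ 2 / (16 - Real.pi ^ 2) := by
      unfold mu0; field_simp; ring
    rw [this]; have := Real.pi_pos; positivity
  have hKpos : 0 < K := by
    rw [hK]
    have h1 := Real.rpow_pos_of_pos hdsr alpha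
    have h2 := Real.rpow_pos_of_pos hdk alpha
    positivity
  have hcK : 0 < c * K := mul_pos hc hKpos
  have hG : Real.Gamma (mu0 M + 2) = (mu0 M + 1) * Real.Gamma (mu0 M + 1) := by
    rw [← Real.Gamma_add_one hs.ne']; ring_nf
  rw [hG]
  unfold F
  generalize mu0 M + 1 = s at *
  have hGp := Real.Gamma_pos_of_pos hs
  have key : ∀ rho : ℝ, 0 < rho →
      rho ^ (s / 2) * ((Real.sqrt (c * K / rho) / phi0) ^ s / s / Real.Gamma s) =
        (c * K) ^ (s / 2) / (s * Real.Gamma s * phi0 ^ s) := by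
    intro rho hr
    have h1 : (Real.sqrt (c * K / rho)) ^ s = (c * K) ^ (s / 2) / rho ^ (s / 2) := by
      rw [Real.sqrt_eq_rpow, ← Real.rpow_mul (by positivity), Real.div_rpow hcK.le hr.le]
      ring_nf
    rw [Real.div_rpow (Real.sqrt_nonneg _) hphi.le, h1]
    have := Real.rpow_pos_of_pos hr (s / 2)
    have := Real.rpow_pos_of_pos hphi s
    field_simp
  have hx0 : Tendsto (fun rho : ℝ => Real.exp (-(Real.sqrt (c * K / rho) / phi0))) atTop (𝓝 1) := by
    have h1 : Tendsto (fun rho : ℝ => c * K / rho) atTop (𝓝 0) :=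
      tendsto_const_nhds.div_atTop tendsto_id
    have h2 : Continuous (fun y : ℝ => Real.exp (-(Real.sqrt y / phi0))) := by fun_prop
    have h3 := (h2.tendsto 0).comp h1
    simpa [Function.comp_def] using h3
  have hlow := hx0.mul_const ((c * K) ^ (s / 2) / (s * Real.Gamma s * phi0 ^ s))
  rw [one_mul] at hlow
  refine tendsto_of_tendsto_of_tendsto_of_le_of_le' hlow tendsto_const_nhds ?_ ?_
  · filter_upwards [eventually_gt_atTop 0] with rho hr
    obtain ⟨hb, -⟩ := lowerGamma_bounds s (Real.sqrt (c * K / rho) / phi0) hs (by positivity)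
    rw [← key rho hr, mul_left_comm, mul_div_assoc']
    gcongr
  · filter_upwards [eventually_gt_atTop 0] with rho hr
    obtain ⟨-, hb⟩ := lowerGamma_bounds s (Real.sqrt (c * K / rho) / phi0) hs (by positivity)
    rw [← key rho hr]
    gcongr
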